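/- Distributional energy-momentum supported on a timelike curve (flat-space, measure-theoretic version of the Mathisson–Souriau result): let γ : ℝ → ℝ⁴ be smooth with η(γ'(t), γ'(t)) = 1 and γ'(t) future timelike for all t. Let μ be a nonzero, locally finite Borel measure on ℝ⁴ with μ(ℝ⁴ \ range γ) = 0, and let S : ℝ⁴ → Matrix (Fin 4) (Fin 4) ℝ be a Borel-measurable field such that for every p, S(p) is symmetric, satisfies the dominant energy condition, and S(p) 0 0 = 1. Suppose the pair is divergence-free in the distributional sense: for every smooth compactly supported f : ℝ⁴ → ℝ⁴, ∫_{ℝ⁴} Σₐ Σ_b (∂f b/∂p a)(p) * S(p) a b dμ(p) = 0. Then (i) γ''(t) = 0 for all t (γ is a straight timelike line), and (ii) there exists m > 0 such that for every continuous compactly supported g : ℝ⁴ → Matrix (Fin 4) (Fin 4) ℝ, ∫_{ℝ⁴} Σᵢⱼ S(p) i j * g(p) i j dμ(p) = m * ∫_ℝ Σᵢⱼ γ'(t) i * γ'(t) j * g(γ(t)) i j dt. -/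

import Mathlib

open Matrix MeasureTheory Filter Topology

noncomputable section

abbrev Vec4 : Type := Fin 4 → ℝ
abbrev Mat4 : Type := Matrix (Fin 4) (Fin 4) ℝ

/-- The Minkowski inner product on ℝ⁴. -/
def mink (x y : Vec4) : ℝ := x 0 * y 0 - x 1 * y 1 - x 2 * y 2 - x 3 * y 3

/-- The matrix diag(1,-1,-1,-1). -/
def E : Mat4 := Matrix.diagonal ![1, -1, -1, -1]

def FutureCausal (x : Vec4) : Prop := 0 ≤ mink x x ∧ 0 ≤ x 0
def FutureTimelike (x : Vec4) : Prop := 0 < mink x x ∧ 0 < x 0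
def FutureNull (x : Vec4) : Prop := x ≠ 0 ∧ mink x x = 0 ∧ 0 < x 0
def UnitTimelike (x : Vec4) : Prop := FutureTimelike x ∧ mink x x = 1

/-- The dominant energy condition for a matrix. -/
def DEC (T : Mat4) : Prop :=
  ∀ ξ ζ : Vec4, FutureCausal ξ → FutureCausal ζ → 0 ≤ ∑ i, ∑ j, ξ i * T i j * ζ j

/-- ⟨T, x⟩ = Σᵢⱼ T i j * x i j. -/
def minner (T x : Mat4) : ℝ := ∑ i, ∑ j, T i j * x i j

/-- The cone D of finite sums of symmetrized products of future causal vectors. -/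
def coneD : Set Mat4 :=
  { x | ∃ (n : ℕ) (ξ ζ : Fin n → Vec4),
      (∀ k, FutureCausal (ξ k)) ∧ (∀ k, FutureCausal (ζ k)) ∧
      x = ∑ k, (1/2 : ℝ) • (vecMulVec (ξ k) (ζ k) + vecMulVec (ζ k) (ξ k)) }

/-- A symmetric matrix is generic if it lies in the interior of D, taken within
the space of symmetric matrices. -/
def Generic (x : Mat4) : Prop :=
  ∃ h : xᵀ = x, (⟨x, h⟩ : { A : Mat4 // Aᵀ = A }) ∈
    interior { A : { A : Mat4 // Aᵀ = A } | A.val ∈ coneD }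

/-- Partial derivative in the a-th coordinate direction. -/
def pd (a : Fin 4) (f : Vec4 → ℝ) (p : Vec4) : ℝ := fderiv ℝ f p (Pi.single a 1)

def SmoothMatField (T : Vec4 → Mat4) : Prop := ∀ a b, ContDiff ℝ (⊤ : ℕ∞) fun p => T p a b
def SymValued (T : Vec4 → Mat4) : Prop := ∀ p, (T p)ᵀ = T p
def DivFree (T : Vec4 → Mat4) : Prop := ∀ p b, ∑ a, pd a (fun q => T q a b) p = 0

/-- A collection of fields tracks a curve. -/
def Tracks (C : Set (Vec4 → Mat4)) (γ : ℝ → Vec4) : Prop :=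
  ∀ x : Vec4 → Mat4, SmoothMatField x → HasCompactSupport x → SymValued x →
    (∃ O : Set Vec4, IsOpen O ∧ Set.range γ ⊆ O ∧ ∀ p ∈ O, x p ∈ coneD) →
    (∃ t₀ : ℝ, Generic (x (γ t₀))) →
    ∃ T ∈ C, 0 < ∫ p, minner (T p) (x p)

/-- Maxwell stress-energy tensor of a field strength matrix. -/
def maxwellT (F : Mat4) : Mat4 :=
  F * E * F - ((1/4 : ℝ) * (E * F * E * F).trace) • E

/-- Source-free Maxwell equations. -/
def SolvesMaxwell (F : Vec4 → Mat4) : Prop :=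
  (∀ p b, ∑ a, E a a * pd a (fun q => F q a b) p = 0) ∧
  (∀ p a b c, pd a (fun q => F q b c) p + pd b (fun q => F q c a) p
      + pd c (fun q => F q a b) p = 0)

/-- Klein–Gordon stress-energy tensor. -/
def kgT (φ : Vec4 → ℝ) (m : ℝ) (p : Vec4) : Mat4 :=
  Matrix.of fun a b =>
    pd a φ p * pd b φ p
      - (1/2 : ℝ) * E a b * ((∑ c, E c c * (pd c φ p)^2) - m^2 * (φ p)^2)

/-- Mass-m Klein–Gordon equation. -/
def SolvesKG (φ : Vec4 → ℝ) (m : ℝ) : Prop :=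
  ∀ p, pd 0 (pd 0 φ) p - pd 1 (pd 1 φ) p - pd 2 (pd 2 φ) p - pd 3 (pd 3 φ) p
    + m^2 * φ p = 0

/-!
Reparametrize the curve by coordinate time as `σ`. Testing the divergence equation for a column of
`S` against functions that vanish on the curve shows that the column is tangent to the curve, so
symmetry and the normalization force `S = σ' ⊗ σ'`. Testing against functions of time alone then
says that the pushforward of `μ` to the time axis has zero derivative, hence is a multiple of
Lebesgue measure, and that `σ'` has zero weak derivative, hence is constant. So `γ'` is a positive
multiple of a fixed vector, and its unit normalization makes the multiple constant.
-/

open scoped ContDiff NNReal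

section TestFunctions

theorem locallyIntegrable_toReal_rnDeriv {X : Type*} [TopologicalSpace X] [MeasurableSpace X]
    (μ ν : Measure X) [IsLocallyFiniteMeasure μ] :
    LocallyIntegrable (fun x => (μ.rnDeriv ν x).toReal) ν := fun x => by
  obtain ⟨s, hs, hμs⟩ := μ.finiteAt_nhds x
  exact ⟨s, hs, Measure.integrableOn_toReal_rnDeriv hμs.ne⟩

-- Both measures have a density with respect to their sum, and densities are determined by test
-- functions.
theorem measure_eq_of_integral_contDiff_eq {V : Type*} [NormedAddCommGroup V] [NormedSpace ℝ V]
    [FiniteDimensional ℝ V] [MeasurableSpace V] [BorelSpace V] {μ ν : Measure V}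
    [IsLocallyFiniteMeasure μ] [IsLocallyFiniteMeasure ν]
    (h : ∀ g : V → ℝ, ContDiff ℝ ∞ g → HasCompactSupport g → ∫ x, g x ∂μ = ∫ x, g x ∂ν) :
    μ = ν := by
  have : ProperSpace V := FiniteDimensional.proper ℝ V
  have hμ : μ ≪ μ + ν := Measure.absolutelyContinuous_of_le (Measure.le_add_right le_rfl)
  have hν : ν ≪ μ + ν := Measure.absolutelyContinuous_of_le (Measure.le_add_left le_rfl)
  have htoReal : ∀ᵐ x ∂(μ + ν),
      (μ.rnDeriv (μ + ν) x).toReal = (ν.rnDeriv (μ + ν) x).toReal := by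
    refine ae_eq_of_integral_contDiff_smul_eq (locallyIntegrable_toReal_rnDeriv μ _)
      (locallyIntegrable_toReal_rnDeriv ν _) fun g hg hgc => ?_
    simp only [smul_eq_mul, mul_comm (g _)]
    exact (integral_rnDeriv_smul hμ).trans ((h g hg hgc).trans (integral_rnDeriv_smul hν).symm)
  have hdensity : μ.rnDeriv (μ + ν) =ᵐ[μ + ν] ν.rnDeriv (μ + ν) := by
    filter_upwards [htoReal, Measure.rnDeriv_lt_top μ (μ + ν), Measure.rnDeriv_lt_top ν (μ + ν)]
      with x hx hμx hνx
    exact (ENNReal.toReal_eq_toReal_iff' hμx.ne hνx.ne).1 hx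
  rw [← Measure.withDensity_rnDeriv_eq μ (μ + ν) hμ, withDensity_congr_ae hdensity,
    Measure.withDensity_rnDeriv_eq ν (μ + ν) hν]

theorem exists_deriv_eq_of_integral_eq_zero {F : Type*} [NormedAddCommGroup F] [NormedSpace ℝ F]
    [CompleteSpace F] {k : ℝ → F} (hk : ContDiff ℝ ∞ k) (hkc : HasCompactSupport k)
    (h0 : ∫ x, k x = 0) :
    ∃ ψ : ℝ → F, ContDiff ℝ ∞ ψ ∧ HasCompactSupport ψ ∧ deriv ψ = k := by
  obtain ⟨R, hR⟩ := hkc.isCompact.isBounded.subset_ball 0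
  have hsupp : Function.support k ⊆ Set.Ioo (-R) R := by
    simpa [Real.ball_eq_Ioo] using (subset_tsupport k).trans hR
  set ψ : ℝ → F := fun u => ∫ t in (-R)..u, k t
  have hψ : ∀ x, HasDerivAt ψ (k x) x := fun x =>
    (hk.continuous.integral_hasStrictDerivAt _ x).hasDerivAt
  have hderiv : deriv ψ = k := funext fun x => (hψ x).deriv
  refine ⟨ψ, ?_, HasCompactSupport.intro (isCompact_Icc (a := -R) (b := R)) fun u hu => ?_, hderiv⟩
  · rw [contDiff_infty_iff_deriv, hderiv]
    exact ⟨fun x => (hψ x).differentiableAt, hk⟩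
  rcases not_and_or.1 hu with hu | hu <;> rw [not_le] at hu
  · have hvanish : ∀ t ∈ Set.uIoc (-R) u, k t = 0 := fun t ht => by
      rw [Set.uIoc_of_ge hu.le] at ht
      exact Function.notMem_support.1 fun htk => (hsupp htk).1.not_ge ht.2
    exact intervalIntegral.integral_zero_ae (.of_forall hvanish)
  · have hcover : Function.support k ⊆ Set.Ioc (-R) u := fun t ht =>
      ⟨(hsupp ht).1, ((hsupp ht).2.trans hu).le⟩
    exact (intervalIntegral.integral_eq_integral_of_support_subset hcover).trans h0

theorem exists_deriv_eq_sub_integral_mul_normed {x₀ : ℝ} (B : ContDiffBump x₀) {g : ℝ → ℝ}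
    (hg : ContDiff ℝ ∞ g) (hgc : HasCompactSupport g) :
    ∃ ψ : ℝ → ℝ, ContDiff ℝ ∞ ψ ∧ HasCompactSupport ψ ∧
      deriv ψ = fun x => g x - (∫ y, g y) * B.normed volume x := by
  refine exists_deriv_eq_of_integral_eq_zero (hg.sub (contDiff_const.mul B.contDiff_normed))
    (hgc.sub B.hasCompactSupport_normed.mul_left) ?_
  rw [integral_sub (hg.continuous.integrable_of_hasCompactSupport hgc)
    (B.integrable_normed.const_mul _), integral_const_mul, B.integral_normed, mul_one, sub_self]

theorem exists_eq_smul_volume_of_integral_deriv_eq_zero {ν : Measure ℝ} [IsLocallyFiniteMeasure ν]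
    (h : ∀ ψ : ℝ → ℝ, ContDiff ℝ ∞ ψ → HasCompactSupport ψ → ∫ x, deriv ψ x ∂ν = 0) :
    ∃ c : ℝ≥0, ν = c • volume := by
  let B : ContDiffBump (0 : ℝ) := default
  have hB : Integrable (B.normed volume) ν :=
    B.continuous_normed.integrable_of_hasCompactSupport B.hasCompactSupport_normed
  let c : ℝ≥0 := ⟨∫ x, B.normed volume x ∂ν, integral_nonneg B.nonneg_normed⟩
  refine ⟨c, measure_eq_of_integral_contDiff_eq fun g hg hgc => ?_⟩
  obtain ⟨ψ, hψ, hψc, hψg⟩ := exists_deriv_eq_sub_integral_mul_normed B hg hgc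
  have hsplit : ∫ x, g x ∂ν - (∫ y, g y) * c = 0 := by
    rw [← h ψ hψ hψc, hψg, integral_sub (hg.continuous.integrable_of_hasCompactSupport hgc)
      (hB.const_mul _), integral_const_mul]
    rfl
  rw [integral_smul_nnreal_measure, NNReal.smul_def, smul_eq_mul, mul_comm, sub_eq_zero.1 hsplit]

/-- The lemma of du Bois-Reymond. -/
theorem exists_ae_eq_const_of_integral_deriv_smul_eq_zero {F : Type*} [NormedAddCommGroup F]
    [NormedSpace ℝ F] [CompleteSpace F] {f : ℝ → F} (hf : LocallyIntegrable f)
    (h : ∀ ψ : ℝ → ℝ, ContDiff ℝ ∞ ψ → HasCompactSupport ψ → ∫ x, deriv ψ x • f x = 0) :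
    ∃ c : F, ∀ᵐ x, f x = c := by
  let B : ContDiffBump (0 : ℝ) := default
  have hB : Integrable fun x => B.normed volume x • f x :=
    hf.integrable_smul_left_of_hasCompactSupport B.continuous_normed B.hasCompactSupport_normed
  refine ⟨∫ x, B.normed volume x • f x, ae_eq_of_integral_contDiff_smul_eq hf
    (locallyIntegrable_const _) fun g hg hgc => ?_⟩
  obtain ⟨ψ, hψ, hψc, hψg⟩ := exists_deriv_eq_sub_integral_mul_normed B hg hgc
  have hsplit : (∫ x, g x • f x) - (∫ y, g y) • ∫ x, B.normed volume x • f x = 0 := by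
    rw [← h ψ hψ hψc, hψg, ← integral_smul, ← integral_sub
      (hf.integrable_smul_left_of_hasCompactSupport hg.continuous hgc) (hB.fun_smul (∫ y, g y))]
    simp only [sub_smul, mul_smul]
  rw [integral_smul_const, sub_eq_zero.1 hsplit]

end TestFunctions

section ChangeOfTime

variable {θ : ℝ → ℝ}

theorem surjective_of_le_deriv {C : ℝ} (hC : 0 < C) (hθ : Differentiable ℝ θ)
    (hderiv : ∀ t, C ≤ deriv θ t) : Function.Surjective θ := by
  have hgrow := mul_sub_le_image_sub_of_le_deriv hθ hderiv
  refine hθ.continuous.surjective ?_ ?_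
  · refine tendsto_atTop_mono' _ ((eventually_ge_atTop 0).mono fun t ht => ?_)
      (tendsto_atTop_add_const_right _ (θ 0) (tendsto_id.const_mul_atTop hC))
    simpa [le_sub_iff_add_le] using hgrow ht
  · refine tendsto_atBot_mono' _ ((eventually_le_atBot 0).mono fun t ht => ?_)
      (tendsto_atBot_add_const_right _ (θ 0) (tendsto_id.const_mul_atBot hC))
    have := hgrow ht
    simp only [id]
    linarith

theorem exists_contDiff_inverse {n : ℕ∞ω} (hθ : ContDiff ℝ n θ) (hpos : ∀ t, 0 < deriv θ t)
    (hsurj : Function.Surjective θ) :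
    ∃ τ : ℝ → ℝ, ContDiff ℝ n τ ∧ Function.LeftInverse τ θ ∧ Function.RightInverse τ θ := by
  let e : ℝ ≃ₜ ℝ := ((strictMono_of_deriv_pos hpos).orderIsoOfSurjective θ hsurj).toHomeomorph
  have he : ∀ t, HasDerivAt e (deriv θ t) t := fun t =>
    (differentiableAt_of_deriv_ne_zero (hpos t).ne').hasDerivAt
  exact ⟨e.symm, e.contDiff_symm_deriv (fun t => (hpos t).ne') he hθ, e.symm_apply_apply,
    e.apply_symm_apply⟩

theorem integral_deriv_smul_comp_eq_integral {F : Type*} [NormedAddCommGroup F] [NormedSpace ℝ F]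
    (hpos : ∀ t, 0 < deriv θ t) (hsurj : Function.Surjective θ) (g : ℝ → F) :
    ∫ t, deriv θ t • g (θ t) = ∫ s, g s := by
  have hderiv : ∀ t ∈ Set.univ, HasDerivWithinAt θ (deriv θ t) Set.univ t := fun t _ =>
    (differentiableAt_of_deriv_ne_zero (hpos t).ne').hasDerivAt.hasDerivWithinAt
  have h := integral_image_eq_integral_abs_deriv_smul .univ hderiv
    (strictMono_of_deriv_pos hpos).injective.injOn g
  simpa only [Set.image_univ, hsurj.range_eq, Measure.restrict_univ, abs_of_pos (hpos _)]
    using h.symm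

end ChangeOfTime

theorem isFiniteMeasureOnCompacts_map {X Y : Type*} [TopologicalSpace X] [MeasurableSpace X]
    [TopologicalSpace Y] [T2Space Y] [MeasurableSpace Y] [OpensMeasurableSpace Y] {μ : Measure X}
    [IsFiniteMeasureOnCompacts μ] {ℓ : X → Y} (hℓ : Measurable ℓ) {σ : Y → X} (hσ : Continuous σ)
    (hμ : ∀ᵐ p ∂μ, σ (ℓ p) = p) : IsFiniteMeasureOnCompacts (μ.map ℓ) := by
  refine ⟨fun K hK => ?_⟩
  rw [Measure.map_apply hℓ hK.measurableSet]
  have hsub : ∀ᵐ p ∂μ, p ∈ ℓ ⁻¹' K → p ∈ σ '' K := hμ.mono fun p hp hpK => ⟨ℓ p, hpK, hp⟩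
  exact (measure_mono_ae hsub).trans_lt (hK.image hσ).measure_lt_top

section Currents

variable {V : Type*} [NormedAddCommGroup V] [NormedSpace ℝ V] {ℓ : V →L[ℝ] ℝ} {σ : ℝ → V}

theorem exists_contDiff_eventuallyEq_comp [FiniteDimensional ℝ V] (hσ : Continuous σ)
    {ψ : ℝ → ℝ} (hψ : ContDiff ℝ ∞ ψ) (hψc : HasCompactSupport ψ) :
    ∃ f : V → ℝ, ContDiff ℝ ∞ f ∧ HasCompactSupport f ∧
      ∀ p, σ (ℓ p) = p → f =ᶠ[𝓝 p] fun q => ψ (ℓ q) := by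
  obtain ⟨R, hRpos, hR⟩ := (hψc.isCompact.image hσ).isBounded.subset_ball_lt 0 0
  let χ : ContDiffBump (0 : V) := ⟨R, R + 1, hRpos, lt_add_one R⟩
  refine ⟨fun q => ψ (ℓ q) * χ q, (hψ.comp ℓ.contDiff).mul χ.contDiff,
    χ.hasCompactSupport.mul_left, fun p hp => ?_⟩
  by_cases hpψ : ℓ p ∈ tsupport ψ
  · filter_upwards [χ.eventuallyEq_one_of_mem_ball (hR ⟨ℓ p, hpψ, hp⟩)] with q hq
    simp [hq]
  · have hψ0 := ℓ.continuous.continuousAt.eventually (notMem_tsupport_iff_eventuallyEq.1 hpψ)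
    filter_upwards [hψ0] with q hq
    simp [hq]

variable [MeasurableSpace V] {μ : Measure V} {j : V → V}

/-- The vector-valued measure `j dμ` has vanishing distributional divergence. A row or column of an
energy-momentum distribution `S dμ` is such a current. -/
def IsDivFreeCurrent (j : V → V) (μ : Measure V) : Prop :=
  ∀ φ : V → ℝ, ContDiff ℝ ∞ φ → HasCompactSupport φ → ∫ p, fderiv ℝ φ p (j p) ∂μ = 0

variable [FiniteDimensional ℝ V]

-- Test against `φ * λ (q - σ (ℓ q))`: the second factor vanishes on the curve, so only its
-- derivative contributes.
theorem IsDivFreeCurrent.ae_eq_smul_deriv [BorelSpace V] (hj : IsDivFreeCurrent j μ)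
    (hloc : LocallyIntegrable j μ) (hσ : ContDiff ℝ ∞ σ) (hμ : ∀ᵐ p ∂μ, σ (ℓ p) = p) :
    ∀ᵐ p ∂μ, j p = ℓ (j p) • deriv σ (ℓ p) := by
  have : ProperSpace V := FiniteDimensional.proper ℝ V
  have hσ' : Continuous fun p => deriv σ (ℓ p) :=
    (hσ.continuous_deriv (by simp)).comp ℓ.continuous
  have hℓj : LocallyIntegrable (fun p => ℓ (j p)) μ :=
    locallyIntegrableOn_univ.1 (ℓ.locallyIntegrableOn_comp (hloc.locallyIntegrableOn _))
  have hdefect : LocallyIntegrable (fun p => j p - ℓ (j p) • deriv σ (ℓ p)) μ :=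
    hloc.sub (hℓj.smul_continuous hσ')
  refine (ae_eq_zero_of_integral_contDiff_smul_eq_zero hdefect fun φ hφ hφc => ?_).mono
    fun p => sub_eq_zero.1
  refine SeparatingDual.eq_zero_of_forall_dual_eq_zero (R := ℝ) fun lam => ?_
  have hh : ContDiff ℝ ∞ fun q => lam (q - σ (ℓ q)) :=
    lam.contDiff.comp (contDiff_id.sub (hσ.comp ℓ.contDiff))
  have hfderiv : ∀ p, HasFDerivAt (fun q => lam (q - σ (ℓ q)))
      (lam ∘L (.id ℝ V - .toSpanSingleton ℝ (deriv σ (ℓ p)) ∘L ℓ)) p := fun p =>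
    lam.hasFDerivAt.comp p ((hasFDerivAt_id p).sub
      ((hσ.differentiable (by simp) (ℓ p)).hasDerivAt.hasFDerivAt.comp p ℓ.hasFDerivAt))
  rw [← lam.integral_comp_comm
    (hdefect.integrable_smul_left_of_hasCompactSupport hφ.continuous hφc),
    ← hj _ (hφ.mul hh) hφc.mul_right]
  refine integral_congr_ae ?_
  filter_upwards [hμ] with p hp
  rw [((hφ.differentiable (by simp) p).hasFDerivAt.fun_mul (hfderiv p)).fderiv]
  simp [hp]

theorem IsDivFreeCurrent.integral_deriv_mul_eq_zero (hj : IsDivFreeCurrent j μ)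
    (hσ : Continuous σ) (hμ : ∀ᵐ p ∂μ, σ (ℓ p) = p) {ψ : ℝ → ℝ} (hψ : ContDiff ℝ ∞ ψ)
    (hψc : HasCompactSupport ψ) : ∫ p, deriv ψ (ℓ p) * ℓ (j p) ∂μ = 0 := by
  obtain ⟨f, hf, hfc, hfψ⟩ := exists_contDiff_eventuallyEq_comp (ℓ := ℓ) hσ hψ hψc
  rw [← hj f hf hfc]
  refine integral_congr_ae ?_
  filter_upwards [hμ] with p hp
  have hderiv := (hψ.differentiable (by simp) (ℓ p)).hasDerivAt.comp_hasFDerivAt p ℓ.hasFDerivAt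
  rw [(hderiv.congr_of_eventuallyEq (hfψ p hp)).fderiv]
  simp

end Currents

section EnergyMomentum

variable {ι : Type*} {o : ι} {σ : ℝ → ι → ℝ}

theorem hasDerivAt_coord [Finite ι] (hσ : Differentiable ℝ σ) (i : ι) (s : ℝ) :
    HasDerivAt (fun s => σ s i) (deriv σ s i) s := by
  have := Fintype.ofFinite ι
  exact hasDerivAt_pi.1 (hσ s).hasDerivAt i

theorem deriv_coord_eq_one [Finite ι] (hσ : Differentiable ℝ σ) (hσo : ∀ s, σ s o = s) (s : ℝ) :
    deriv σ s o = 1 := by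
  have h := hasDerivAt_coord hσ o s
  simp only [hσo] at h
  exact h.unique (hasDerivAt_id s)

variable [Fintype ι] {S : (ι → ℝ) → Matrix ι ι ℝ} {μ : Measure (ι → ℝ)}

/-- `S dμ` is a conserved symmetric tensor distribution of order zero on `ι → ℝ`; dividing `S` by
its energy density with respect to the time coordinate `o` fixes the splitting into `S` and `μ`. -/
structure IsConservedTensor (o : ι) (S : (ι → ℝ) → Matrix ι ι ℝ) (μ : Measure (ι → ℝ)) : Prop where
  isSymm : ∀ p, (S p).IsSymm
  time_time : ∀ p, S p o o = 1
  locallyIntegrable_col : ∀ b, LocallyIntegrable (fun p => (S p).col b) μ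
  isDivFreeCurrent_col : ∀ b, IsDivFreeCurrent (fun p => (S p).col b) μ

namespace IsConservedTensor

theorem ae_eq_vecMulVec_deriv (hS : IsConservedTensor o S μ) (hσ : ContDiff ℝ ∞ σ)
    (hμ : ∀ᵐ p ∂μ, σ (p o) = p) :
    ∀ᵐ p ∂μ, S p = vecMulVec (deriv σ (p o)) (deriv σ (p o)) := by
  have hcol : ∀ᵐ p ∂μ, ∀ b a, S p a b = S p o b * deriv σ (p o) a := by
    refine ae_all_iff.2 fun b => ?_
    filter_upwards [(hS.isDivFreeCurrent_col b).ae_eq_smul_deriv (ℓ := .proj o)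
      (hS.locallyIntegrable_col b) hσ hμ] with p hp a
    exact congrFun hp a
  filter_upwards [hcol] with p hp
  have hrow : ∀ b, S p o b = deriv σ (p o) b := fun b => by
    rw [← (hS.isSymm p).apply, hp o b, hS.time_time, one_mul]
  ext a b
  rw [hp b a, hrow, vecMulVec_apply, mul_comm]

theorem integral_deriv_mul_deriv_map_eq_zero (hS : IsConservedTensor o S μ)
    (hσ : ContDiff ℝ ∞ σ) (hσo : ∀ s, σ s o = s) (hμ : ∀ᵐ p ∂μ, σ (p o) = p) {ψ : ℝ → ℝ}
    (hψ : ContDiff ℝ ∞ ψ) (hψc : HasCompactSupport ψ) (b : ι) :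
    ∫ s, deriv ψ s * deriv σ s b ∂μ.map (· o) = 0 := by
  have hcont : Continuous fun s => deriv ψ s * deriv σ s b :=
    (hψ.continuous_deriv (by simp)).mul
      ((continuous_apply b).comp (hσ.continuous_deriv (by simp)))
  rw [integral_map (measurable_pi_apply o).aemeasurable hcont.aestronglyMeasurable,
    ← (hS.isDivFreeCurrent_col b).integral_deriv_mul_eq_zero (ℓ := .proj o) hσ.continuous hμ hψ hψc]
  refine integral_congr_ae ?_
  filter_upwards [hS.ae_eq_vecMulVec_deriv hσ hμ] with p hp
  simp [hp, vecMulVec_apply, deriv_coord_eq_one (hσ.differentiable (by simp)) hσo]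

theorem exists_map_time_eq_smul_volume [IsLocallyFiniteMeasure μ] (hS : IsConservedTensor o S μ)
    (hσ : ContDiff ℝ ∞ σ) (hσo : ∀ s, σ s o = s) (hμ : ∀ᵐ p ∂μ, σ (p o) = p) :
    ∃ c : ℝ≥0, μ.map (· o) = c • volume := by
  have := isFiniteMeasureOnCompacts_map (measurable_pi_apply o) hσ.continuous hμ
  refine exists_eq_smul_volume_of_integral_deriv_eq_zero fun ψ hψ hψc => ?_
  simpa [deriv_coord_eq_one (hσ.differentiable (by simp)) hσo]
    using hS.integral_deriv_mul_deriv_map_eq_zero hσ hσo hμ hψ hψc o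

theorem exists_deriv_eq_const (hS : IsConservedTensor o S μ) (hσ : ContDiff ℝ ∞ σ)
    (hσo : ∀ s, σ s o = s) (hμ : ∀ᵐ p ∂μ, σ (p o) = p) {c : ℝ≥0} (hc : c ≠ 0)
    (hμc : μ.map (· o) = c • volume) : ∃ v, ∀ s, deriv σ s = v := by
  have hcont : ∀ b, Continuous fun s => deriv σ s b := fun b =>
    (continuous_apply b).comp (hσ.continuous_deriv (by simp))
  have hconst : ∀ b, ∃ v : ℝ, ∀ᵐ s, deriv σ s b = v := fun b => by
    refine exists_ae_eq_const_of_integral_deriv_smul_eq_zero (hcont b).locallyIntegrable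
      fun ψ hψ hψc => ?_
    have h := hS.integral_deriv_mul_deriv_map_eq_zero hσ hσo hμ hψ hψc b
    rw [hμc, integral_smul_nnreal_measure] at h
    exact (smul_eq_zero.1 h).resolve_left hc
  choose v hv using hconst
  exact ⟨v, fun s => funext fun b =>
    congrFun (Measure.eq_of_ae_eq (hv b) (hcont b) continuous_const) s⟩

theorem exists_eq_smul_map_volume [IsLocallyFiniteMeasure μ] (hμ0 : μ ≠ 0)
    (hS : IsConservedTensor o S μ) (hσ : ContDiff ℝ ∞ σ) (hσo : ∀ s, σ s o = s)
    (hμ : ∀ᵐ p ∂μ, σ (p o) = p) :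
    ∃ (v : ι → ℝ) (c : ℝ≥0), (∀ s, deriv σ s = v) ∧ (∀ᵐ p ∂μ, S p = vecMulVec v v) ∧
      c ≠ 0 ∧ μ = c • volume.map σ := by
  obtain ⟨c, hc⟩ := hS.exists_map_time_eq_smul_volume hσ hσo hμ
  have hμσ : μ = c • volume.map σ := by
    rw [← Measure.map_smul, ← hc, Measure.map_map hσ.continuous.measurable
      (measurable_pi_apply o), Function.comp_def, Measure.map_congr hμ, Measure.map_id']
  have hc0 : c ≠ 0 := by
    rintro rfl
    exact hμ0 (by rw [hμσ, zero_smul])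
  obtain ⟨v, hv⟩ := hS.exists_deriv_eq_const hσ hσo hμ hc0 hc
  refine ⟨v, c, hv, ?_, hc0, hμσ⟩
  simpa only [hv] using hS.ae_eq_vecMulVec_deriv hσ hμ

end IsConservedTensor

end EnergyMomentum

section ArbitraryParameter

theorem eq_of_quadraticForm_smul_eq_one {R M : Type*} [Field R] [LinearOrder R]
    [IsStrictOrderedRing R] [AddCommGroup M] [Module R M] {Q : QuadraticForm R M} {v : M} {a b : R}
    (ha : 0 < a) (hb : 0 < b) (hQa : Q (a • v) = 1) (hQb : Q (b • v) = 1) : a = b := by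
  rw [QuadraticMap.map_smul, smul_eq_mul] at hQa hQb
  have hQ : Q v ≠ 0 := fun h => by simp [h] at hQa
  exact (mul_self_inj ha.le hb.le).1 (mul_right_cancel₀ hQ (hQa.trans hQb.symm))

variable {ι : Type*} [Fintype ι]

theorem integral_sum_mul_eq_of_ae_eq_vecMulVec {T : Type*} [MeasurableSpace T] {ν : Measure T}
    {σ : T → ι → ℝ} (hσ : Measurable σ) {μ : Measure (ι → ℝ)} {c : ℝ≥0} (hμ : μ = c • ν.map σ)
    {S : (ι → ℝ) → Matrix ι ι ℝ} {v : ι → ℝ} (hS : ∀ᵐ p ∂μ, S p = vecMulVec v v)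
    {g : (ι → ℝ) → Matrix ι ι ℝ} (hg : ∀ i j, Measurable fun p => g p i j) :
    ∫ p, ∑ i, ∑ j, S p i j * g p i j ∂μ = c * ∫ s, ∑ i, ∑ j, v i * v j * g (σ s) i j ∂ν := by
  have hmeas : Measurable fun p => ∑ i, ∑ j, v i * v j * g p i j := by fun_prop
  have hcongr : (fun p => ∑ i, ∑ j, S p i j * g p i j) =ᵐ[μ]
      fun p => ∑ i, ∑ j, v i * v j * g p i j := by
    filter_upwards [hS] with p hp
    simp only [hp, vecMulVec_apply]
  rw [integral_congr_ae hcongr, hμ, integral_smul_nnreal_measure,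
    integral_map hσ.aemeasurable hmeas.aestronglyMeasurable, NNReal.smul_def, smul_eq_mul]

theorem integral_sum_mul_eq_inv_mul_integral_comp {θ : ℝ → ℝ} {a : ℝ} (ha : 0 < a)
    (hθ : ∀ t, deriv θ t = a) (hsurj : Function.Surjective θ) (v : ι → ℝ)
    (G : ℝ → Matrix ι ι ℝ) :
    ∫ s, ∑ i, ∑ j, v i * v j * G s i j
      = a⁻¹ * ∫ t, ∑ i, ∑ j, (a • v) i * (a • v) j * G (θ t) i j := by
  rw [← integral_deriv_smul_comp_eq_integral (fun t => (hθ t).symm ▸ ha) hsurj,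
    ← integral_const_mul]
  congr with t
  simp only [hθ t, Finset.mul_sum, Pi.smul_apply, smul_eq_mul]
  refine Finset.sum_congr rfl fun i _ => Finset.sum_congr rfl fun j _ => ?_
  field_simp

theorem distributional_energy_momentum_on_curve_general (o : ι) (Q : QuadraticForm ℝ (ι → ℝ))
    (γ : ℝ → ι → ℝ) (hγ : ContDiff ℝ ∞ γ) (hQ : ∀ t, Q (deriv γ t) = 1)
    (hpos : ∀ t, 0 < deriv γ t o) (hsurj : Function.Surjective fun t => γ t o)
    (μ : Measure (ι → ℝ)) [IsLocallyFiniteMeasure μ] (hμ0 : μ ≠ 0)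
    (hμsupp : μ (Set.range γ)ᶜ = 0) (S : (ι → ℝ) → Matrix ι ι ℝ) (hS : IsConservedTensor o S μ) :
    (∀ t, deriv (deriv γ) t = 0) ∧
    ∃ m : ℝ, 0 < m ∧
      ∀ g : (ι → ℝ) → Matrix ι ι ℝ, (∀ i j, Continuous fun p => g p i j) →
        HasCompactSupport g →
        ∫ p, (∑ i, ∑ j, S p i j * g p i j) ∂μ
          = m * ∫ t : ℝ, ∑ i, ∑ j, deriv γ t i * deriv γ t j * g (γ t) i j := by
  have hγd : Differentiable ℝ γ := hγ.differentiable (by simp)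
  have hθ : ∀ t, HasDerivAt (fun t => γ t o) (deriv γ t o) t := hasDerivAt_coord hγd o
  obtain ⟨τ, hτ, hτl, hτr⟩ := exists_contDiff_inverse (contDiff_pi.1 hγ o)
    (fun t => (hθ t).deriv ▸ hpos t) hsurj
  have hγτ : ∀ t, γ (τ (γ t o)) = γ t := fun t => congrArg γ (hτl t)
  have hσ : ContDiff ℝ ∞ fun s => γ (τ s) := hγ.comp hτ
  have hμ : ∀ᵐ p ∂μ, γ (τ (p o)) = p := by
    filter_upwards [show ∀ᵐ p ∂μ, p ∈ Set.range γ from hμsupp]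
    rintro _ ⟨t, rfl⟩
    exact hγτ t
  obtain ⟨v, c, hv, hSv, hc, hμc⟩ := hS.exists_eq_smul_map_volume hμ0 hσ hτr hμ
  have hvel : ∀ t, deriv γ t = deriv γ t o • v := fun t => by
    have h := (hσ.differentiable (by simp) (γ t o)).hasDerivAt.scomp t (hθ t)
    rw [hv, show (fun s => γ (τ s)) ∘ (fun t => γ t o) = γ from funext hγτ] at h
    exact h.deriv
  obtain ⟨a, ha, hspeed, hconst⟩ :
      ∃ a, 0 < a ∧ (∀ t, deriv γ t o = a) ∧ ∀ t, deriv γ t = a • v := by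
    have hspeed : ∀ t, deriv γ t o = deriv γ 0 o := fun t =>
      eq_of_quadraticForm_smul_eq_one (hpos t) (hpos 0) (hvel t ▸ hQ t) (hvel 0 ▸ hQ 0)
    exact ⟨_, hpos 0, hspeed, fun t => hspeed t ▸ hvel t⟩
  refine ⟨fun t => ?_, c * a⁻¹, by positivity, fun g hg _ => ?_⟩
  · rw [funext hconst, deriv_const]
  rw [integral_sum_mul_eq_of_ae_eq_vecMulVec hσ.continuous.measurable hμc hSv
    fun i j => (hg i j).measurable, integral_sum_mul_eq_inv_mul_integral_comp ha
    (fun t => (hθ t).deriv.trans (hspeed t)) hsurj, mul_assoc]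
  simp only [hγτ, hconst]

end ArbitraryParameter

section Minkowski

/-- The quadratic form of the Minkowski inner product. -/
def minkowskiForm : QuadraticForm ℝ Vec4 := QuadraticMap.weightedSumSquares ℝ ![(1 : ℝ), -1, -1, -1]

theorem minkowskiForm_apply (x : Vec4) : minkowskiForm x = mink x x := by
  simp only [minkowskiForm, QuadraticMap.weightedSumSquares_apply, Fin.sum_univ_four, mink,
    smul_eq_mul, cons_val]
  ring

theorem UnitTimelike.one_le_time {x : Vec4} (hx : UnitTimelike x) : 1 ≤ x 0 := by
  obtain ⟨⟨-, hpos⟩, hunit⟩ := hx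
  unfold mink at hunit
  nlinarith [sq_nonneg (x 1), sq_nonneg (x 2), sq_nonneg (x 3)]

theorem futureCausal_single_add_smul_single {s : ℝ} (hs : |s| ≤ 1) (i : Fin 4) :
    FutureCausal (Pi.single 0 1 + s • Pi.single i 1) := by
  have hlow := (abs_le.1 hs).1
  have hsq : s ^ 2 ≤ 1 := (sq_le_one_iff_abs_le_one s).2 hs
  constructor <;> fin_cases i <;>
    simp only [mink, Pi.add_apply, Pi.smul_apply, Pi.single_apply, smul_eq_mul, Fin.zero_eta,
      Fin.mk_one, Fin.reduceFinMk, Fin.reduceEq, ite_true, ite_false] <;>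
    nlinarith

-- Average the energy condition on `e₀ ± eᵢ` and `e₀ ± eⱼ` over opposite choices of both signs.
theorem DEC.abs_apply_le {T : Mat4} (hT : DEC T) (i j : Fin 4) : |T i j| ≤ T 0 0 := by
  have hdec : ∀ s t : ℝ, |s| ≤ 1 → |t| ≤ 1 →
      0 ≤ T 0 0 + t * T 0 j + s * T i 0 + s * t * T i j := by
    intro s t hs ht
    have h := hT _ _ (futureCausal_single_add_smul_single hs i)
      (futureCausal_single_add_smul_single ht j)
    simp only [Pi.add_apply, Pi.smul_apply, smul_eq_mul, add_mul, mul_add,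
      Finset.sum_add_distrib, Pi.single_apply, mul_ite, ite_mul, mul_one, one_mul, mul_zero,
      zero_mul, Finset.sum_ite_eq', Finset.mem_univ, if_true] at h
    linarith
  have hone : |(1 : ℝ)| ≤ 1 := by simp
  have hneg : |(-1 : ℝ)| ≤ 1 := by simp
  rw [abs_le]
  constructor
  · linarith [hdec 1 1 hone hone, hdec (-1) (-1) hneg hneg]
  · linarith [hdec 1 (-1) hone hneg, hdec (-1) 1 hneg hone]

theorem fderiv_apply_eq_sum_pd_mul (f : Vec4 → ℝ) (p v : Vec4) :
    fderiv ℝ f p v = ∑ a, pd a f p * v a := by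
  conv_lhs => rw [pi_eq_sum_univ' v, map_sum]
  refine Finset.sum_congr rfl fun a _ => ?_
  rw [map_smul, smul_eq_mul, mul_comm, pd]

theorem isDivFreeCurrent_col_of_integral_sum_pd_mul_eq_zero {μ : Measure Vec4} {S : Vec4 → Mat4}
    (hdiv : ∀ f : Vec4 → Vec4, (∀ a : Fin 4, ContDiff ℝ ∞ fun p => f p a) → HasCompactSupport f →
      ∫ p, (∑ a, ∑ b, pd a (fun q => f q b) p * S p a b) ∂μ = 0) (c : Fin 4) :
    IsDivFreeCurrent (fun p => (S p).col c) μ := by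
  intro φ hφ hφc
  have hcomp : ∀ b, ContDiff ℝ ∞ fun p => (Pi.single c (φ p) : Vec4) b :=
    contDiff_pi.1 ((LinearMap.single ℝ (fun _ => ℝ) c).toContinuousLinearMap.contDiff.comp hφ)
  have hsupp : HasCompactSupport fun p => (Pi.single c (φ p) : Vec4) :=
    hφc.comp_left (g := fun x => (Pi.single c x : Vec4)) (Pi.single_zero c)
  rw [← hdiv _ hcomp hsupp]
  refine integral_congr_ae (.of_forall fun p => ?_)
  simp only [fderiv_apply_eq_sum_pd_mul]
  refine Finset.sum_congr rfl fun a _ => ?_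
  rw [Finset.sum_eq_single c (fun b _ hb => by simp [hb, pd]) (by simp)]
  simp

theorem locallyIntegrable_col_of_dec {μ : Measure Vec4} [IsLocallyFiniteMeasure μ]
    {S : Vec4 → Mat4} (hmeas : ∀ a b : Fin 4, Measurable fun p => S p a b)
    (hdec : ∀ p, DEC (S p)) (hnorm : ∀ p, S p 0 0 = 1) (b : Fin 4) :
    LocallyIntegrable (fun p => (S p).col b) μ := by
  refine (locallyIntegrable_const (1 : ℝ)).mono
    (measurable_pi_iff.2 fun a => hmeas a b).aestronglyMeasurable (.of_forall fun p => ?_)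
  rw [norm_one, pi_norm_le_iff_of_nonneg zero_le_one]
  exact fun a => hnorm p ▸ (hdec p).abs_apply_le a b

end Minkowski

/-- Distributional energy-momentum supported on a timelike curve. -/
theorem distributional_energy_momentum_on_curve (γ : ℝ → Vec4) (hγ : ContDiff ℝ (⊤ : ℕ∞) γ)
    (hunit : ∀ t : ℝ, mink (deriv γ t) (deriv γ t) = 1)
    (htl : ∀ t : ℝ, FutureTimelike (deriv γ t))
    (μ : Measure Vec4) [IsLocallyFiniteMeasure μ] (hμ0 : μ ≠ 0)
    (hμsupp : μ (Set.range γ)ᶜ = 0)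
    (S : Vec4 → Mat4) (hmeas : ∀ a b : Fin 4, Measurable fun p => S p a b)
    (hsym : ∀ p, (S p)ᵀ = S p) (hdec : ∀ p, DEC (S p)) (hnorm : ∀ p, S p 0 0 = 1)
    (hdiv : ∀ f : Vec4 → Vec4, (∀ a : Fin 4, ContDiff ℝ (⊤ : ℕ∞) fun p => f p a) →
      HasCompactSupport f →
      ∫ p, (∑ a, ∑ b, pd a (fun q => f q b) p * S p a b) ∂μ = 0) :
    (∀ t : ℝ, deriv (deriv γ) t = 0) ∧
    ∃ m : ℝ, 0 < m ∧
      ∀ g : Vec4 → Mat4, (∀ a b : Fin 4, Continuous fun p => g p a b) →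
        HasCompactSupport g →
        ∫ p, (∑ i, ∑ j, S p i j * g p i j) ∂μ
          = m * ∫ t : ℝ, ∑ i, ∑ j, deriv γ t i * deriv γ t j * g (γ t) i j := by
  have htime := hasDerivAt_coord (hγ.differentiable (by simp)) 0
  have hsurj : Function.Surjective fun t => γ t 0 :=
    surjective_of_le_deriv one_pos (fun t => (htime t).differentiableAt) fun t =>
      (htime t).deriv ▸ UnitTimelike.one_le_time ⟨htl t, hunit t⟩
  have hS : IsConservedTensor 0 S μ :=
    ⟨hsym, hnorm, locallyIntegrable_col_of_dec hmeas hdec hnorm,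
      isDivFreeCurrent_col_of_integral_sum_pd_mul_eq_zero hdiv⟩
  exact distributional_energy_momentum_on_curve_general 0 minkowskiForm γ hγ
    (fun t => (minkowskiForm_apply _).trans (hunit t)) (fun t => (htl t).2) hsurj μ hμ0 hμsupp S hS
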